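/- Let q = 2^m. Every Euclidean self-orthogonal linear code over F_q of even length n is contained in a Euclidean self-dual code of length n (dimension n/2). -/

import Mathlib

/-!
In characteristic two `x ⬝ᵥ x = (1 ⬝ᵥ x) ^ 2`, so every vector of the hyperplane `1ᗮ` is orthogonal
to itself. If `D ⊆ Dᗮ` has codimension at least two in `Dᗮ`, the hyperplane meets `Dᗮ` outside `D`,
and adjoining such a vector to `D` gives a larger self-orthogonal code. A maximal self-orthogonal
code `D` therefore has codimension at most one in `Dᗮ`; as `dim D + dim Dᗮ` is the length, an even
number, the codimension is zero.
-/

open LinearMap (BilinForm)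
open Module (Dual finrank)

section SelfOrthogonal

variable {R M : Type*} [CommSemiring R] [AddCommMonoid M] [Module R M]
  {B : BilinForm R M} {U W : Submodule R M}

/-- Self-orthogonality of a submodule for a bilinear form: a self-orthogonal code when the form is
the dot product, a totally isotropic subspace in general. -/
def IsSelfOrthogonal (B : BilinForm R M) (W : Submodule R M) : Prop :=
  W ≤ B.orthogonal W

/-- Self-duality of a submodule for a bilinear form: a self-dual code when the form is the dot
product, a Lagrangian subspace when it is alternating and nondegenerate. -/
def IsSelfDual (B : BilinForm R M) (W : Submodule R M) : Prop :=
  B.orthogonal W = W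

theorem le_orthogonal_comm (hB : B.IsRefl) : U ≤ B.orthogonal W ↔ W ≤ B.orthogonal U :=
  ⟨fun h _ hw _ hu => hB _ _ (h hu _ hw), fun h _ hu _ hw => hB _ _ (h hw _ hu)⟩

theorem IsSelfOrthogonal.sup (hB : B.IsRefl) (hU : IsSelfOrthogonal B U)
    (hW : IsSelfOrthogonal B W) (hUW : U ≤ B.orthogonal W) : IsSelfOrthogonal B (U ⊔ W) :=
  sup_le ((le_orthogonal_comm hB).mp (sup_le hU ((le_orthogonal_comm hB).mp hUW)))
    ((le_orthogonal_comm hB).mp (sup_le hUW hW))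

theorem isSelfOrthogonal_span_singleton {x : M} (hx : B x x = 0) :
    IsSelfOrthogonal B (R ∙ x) := by
  intro u hu v hv
  obtain ⟨a, rfl⟩ := Submodule.mem_span_singleton.mp hu
  obtain ⟨b, rfl⟩ := Submodule.mem_span_singleton.mp hv
  rw [map_smul, map_smul, LinearMap.smul_apply, hx, smul_zero, smul_zero]

theorem IsSelfOrthogonal.sup_span_singleton (hB : B.IsRefl) (hW : IsSelfOrthogonal B W) {x : M}
    (hxW : x ∈ B.orthogonal W) (hx : B x x = 0) : IsSelfOrthogonal B (W ⊔ R ∙ x) :=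
  hW.sup hB (isSelfOrthogonal_span_singleton hx) <|
    (le_orthogonal_comm hB).mp ((Submodule.span_singleton_le_iff_mem _ _).mpr hxW)

end SelfOrthogonal

section FiniteDimensional

variable {K V : Type*} [Field K] [AddCommGroup V] [Module K V] [FiniteDimensional K V]
  {B : BilinForm K V} {f : Dual K V} {W : Submodule K V}

theorem finrank_le_finrank_inf_ker_add_one (f : Dual K V) (W : Submodule K V) :
    finrank K W ≤ finrank K (W ⊓ f.ker : Submodule K V) + 1 := by
  have hrange : finrank K f.range ≤ 1 := f.range.finrank_le.trans_eq (Module.finrank_self K)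
  have hrank := f.finrank_range_add_finrank_ker
  have hsup := Submodule.finrank_sup_add_finrank_inf_eq W f.ker
  have hle := (W ⊔ f.ker).finrank_le
  omega

theorem finrank_add_finrank_orthogonal_of_nondegenerate (hB : B.Nondegenerate)
    (W : Submodule K V) : finrank K W + finrank K (B.orthogonal W) = finrank K V := by
  rw [BilinForm.finrank_orthogonal hB, Nat.add_sub_cancel' W.finrank_le]

theorem IsSelfDual.finrank_eq (hB : B.Nondegenerate) (hW : IsSelfDual B W) :
    finrank K W = finrank K V / 2 := by
  have hadd := finrank_add_finrank_orthogonal_of_nondegenerate hB W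
  rw [hW] at hadd
  omega

theorem IsSelfOrthogonal.exists_gt (hB : B.IsRefl) (hf : ∀ x, f x = 0 → B x x = 0)
    (hW : IsSelfOrthogonal B W) (hcodim : finrank K W + 2 ≤ finrank K (B.orthogonal W)) :
    ∃ E > W, IsSelfOrthogonal B E := by
  have hnle : ¬ B.orthogonal W ⊓ f.ker ≤ W := fun hle => by
    have hker := finrank_le_finrank_inf_ker_add_one f (B.orthogonal W)
    have hmono := Submodule.finrank_mono hle
    omega
  obtain ⟨x, ⟨hxW, hxf⟩, hx⟩ := SetLike.not_le_iff_exists.mp hnle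
  refine ⟨W ⊔ K ∙ x, left_lt_sup.mpr ?_, hW.sup_span_singleton hB hxW (hf x hxf)⟩
  rwa [Submodule.span_singleton_le_iff_mem]

theorem IsSelfOrthogonal.exists_isSelfDual_ge (hB : B.IsRefl) (hnd : B.Nondegenerate)
    (hf : ∀ x, f x = 0 → B x x = 0) (heven : Even (finrank K V)) (hW : IsSelfOrthogonal B W) :
    ∃ D ≥ W, IsSelfDual B D := by
  obtain ⟨D, hWD, hD⟩ := exists_maximal_ge_of_wellFoundedGT (IsSelfOrthogonal B) W hW
  have hcodim : finrank K (B.orthogonal D) < finrank K D + 2 := by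
    by_contra! hle
    obtain ⟨E, hDE, hE⟩ := hD.prop.exists_gt hB hf hle
    exact hD.not_prop_of_gt hDE hE
  have hadd := finrank_add_finrank_orthogonal_of_nondegenerate hnd D
  obtain ⟨r, hr⟩ := heven
  have hfinrank : finrank K (B.orthogonal D) ≤ finrank K D := by omega
  exact ⟨D, hWD, (Submodule.eq_of_le_of_finrank_le hD.prop hfinrank).symm⟩

end FiniteDimensional

section DotProduct

variable {R ι : Type*} [CommSemiring R] [Fintype ι]

theorem isRefl_dotProductBilin :
    BilinForm.IsRefl (dotProductBilin R R : BilinForm R (ι → R)) :=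
  fun x y hxy => (dotProduct_comm y x).trans hxy

theorem nondegenerate_dotProductBilin :
    (dotProductBilin R R : BilinForm R (ι → R)).Nondegenerate :=
  ⟨dotProduct_eq_zero, fun y hy => dotProduct_eq_zero y fun x => (dotProduct_comm y x).trans (hy x)⟩

theorem dotProduct_self_eq_one_dotProduct_sq [CharP R 2] (x : ι → R) :
    x ⬝ᵥ x = (1 ⬝ᵥ x) ^ 2 := by
  rw [sq, one_dotProduct, CharTwo.sum_mul_self, dotProduct]

end DotProduct

theorem stmt10_general {F ι : Type*} [Field F] [CharP F 2] [Fintype ι]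
    (hι : Even (Fintype.card ι)) (C : Submodule F (ι → F))
    (hC : ∀ x ∈ C, ∀ y ∈ C, x ⬝ᵥ y = 0) :
    ∃ D : Submodule F (ι → F), C ≤ D ∧ finrank F D = Fintype.card ι / 2 ∧
      (∀ x ∈ D, ∀ y ∈ D, x ⬝ᵥ y = 0) ∧
      (∀ x : ι → F, (∀ c ∈ D, x ⬝ᵥ c = 0) → x ∈ D) := by
  let B : BilinForm F (ι → F) := dotProductBilin F F
  have hself (x : ι → F) (hx : B 1 x = 0) : B x x = 0 :=
    (dotProduct_self_eq_one_dotProduct_sq x).trans ((pow_eq_zero_iff two_ne_zero).mpr hx)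
  have hCself : IsSelfOrthogonal B C := fun x hx y hy => hC y hy x hx
  have hcard : finrank F (ι → F) = Fintype.card ι := Module.finrank_fintype_fun_eq_card F
  obtain ⟨D, hCD, hD⟩ := hCself.exists_isSelfDual_ge (f := B 1) isRefl_dotProductBilin
    nondegenerate_dotProductBilin hself (hcard ▸ hι)
  refine ⟨D, hCD, hcard ▸ hD.finrank_eq nondegenerate_dotProductBilin,
    fun x hx y hy => hD.ge hy x hx, fun x hx => hD.le fun c hc => ?_⟩
  exact (dotProduct_comm c x).trans (hx c hc)

/-- over F_q with q = 2^m, every Euclidean self-orthogonal code of even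
length n is contained in a Euclidean self-dual code of dimension n/2. -/
theorem stmt10 (m : ℕ) (hm : 0 < m)
    (F : Type) [Field F] [Fintype F] (hF : Fintype.card F = 2 ^ m)
    (n : ℕ) (hn : Even n)
    (C : Submodule F (Fin n → F))
    (hso : ∀ x ∈ C, ∀ y ∈ C, ∑ i, x i * y i = 0) :
    ∃ D : Submodule F (Fin n → F), C ≤ D ∧ Module.finrank F D = n / 2 ∧
      (∀ x ∈ D, ∀ y ∈ D, ∑ i, x i * y i = 0) ∧
      (∀ x : Fin n → F, (∀ c ∈ D, ∑ i, x i * c i = 0) → x ∈ D) := by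
  have : CharP F 2 := charP_of_card_eq_prime_pow hF
  simpa only [dotProduct, Fintype.card_fin] using
    stmt10_general ((Fintype.card_fin n).symm ▸ hn) C hso
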